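/- (Monotonicity of the de Branges functions; equivalent to the Askey–Gasper inequality and to Weinstein's inequality Λ_k^n(t) ≥ 0.) Let n ≥ 1 and let τ_1, …, τ_{n+1} be a de Branges system of index n. Then for every k with 1 ≤ k ≤ n+1 and every t ≥ 0, one has τ̇_k(t) ≤ 0. -/

import Mathlib

/-- A de Branges system of index `n`: differentiable functions `τ k : ℝ → ℝ`
(`k = 1, …, n+1`) with `τ (n+1) ≡ 0`, `τ k 0 = n+1-k`, and
`τ_{k+1}(t) - τ_k(t) = τ̇_k(t)/k + τ̇_{k+1}(t)/(k+1)` for `k = 1, …, n`. -/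
structure IsDeBrangesSystem (n : ℕ) (τ : ℕ → ℝ → ℝ) : Prop where
  differentiable : ∀ k : ℕ, 1 ≤ k → k ≤ n + 1 → Differentiable ℝ (τ k)
  top_eq_zero : ∀ t : ℝ, τ (n + 1) t = 0
  initial : ∀ k : ℕ, 1 ≤ k → k ≤ n + 1 → τ k 0 = (n : ℝ) + 1 - (k : ℝ)
  system : ∀ k : ℕ, 1 ≤ k → k ≤ n → ∀ t : ℝ,
    τ (k + 1) t - τ k t = deriv (τ k) t / (k : ℝ) + deriv (τ (k + 1)) t / ((k : ℝ) + 1)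

/-!
Solving the system downwards from `k = n + 1` gives `τ̇_k(t) = -k Λ_k^n(t)`, where `Λ_k^n` is the
coefficient of `q ^ k` in `U_n(1 - y + y (q + q⁻¹) / 2)` and `y = e^{-t}`. For the positivity of
`Λ_k^n` write `1 - y = a²` and `y = b²`. The argument of `U_n` is half the trace of the matrix
`G = A D A D⁻¹` of determinant `1`, where `A` is the reflection with rows `(a, b)` and `(b, -a)` and
`D = diag(q, 1)`, so `U_n` of it is the trace of the symmetric power `Symⁿ G`. With `S = Symⁿ A`
this trace is `∑ S_ij S_ji q ^ (j - i)`. Since `A` is symmetric, `S` is self-adjoint for the inner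
product making the monomials orthogonal with squared norms `1 / (n choose i)`; hence `S_ij` and
`S_ji` have the same sign.
-/

section SymmetricPower

open Polynomial

section CommSemiring

variable {R S : Type*} [CommSemiring R] [CommSemiring S]

/-- The linear form attached to row `r` of a `2 × 2` matrix, dehomogenized: `X` stands for the
first variable and `1` for the second. -/
noncomputable def rowPoly (M : Matrix (Fin 2) (Fin 2) R) (r : Fin 2) : R[X] :=
  C (M r 0) * X + C (M r 1)

/-- The `n`-th symmetric power of a `2 × 2` matrix: row `i` holds the coefficients of
`ℓ₀ ^ i * ℓ₁ ^ (n - i)`, where `ℓ₀` and `ℓ₁` are the linear forms of the rows, column `j` being the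
monomial `X ^ j * Y ^ (n - j)` (dehomogenized at `Y = 1`). -/
noncomputable def symPow (n : ℕ) (M : Matrix (Fin 2) (Fin 2) R) :
    Matrix (Fin (n + 1)) (Fin (n + 1)) R :=
  .of fun i j ↦ (rowPoly M 0 ^ (i : ℕ) * rowPoly M 1 ^ (n - i)).coeff j

lemma natDegree_rowPoly_le (M : Matrix (Fin 2) (Fin 2) R) (r : Fin 2) :
    (rowPoly M r).natDegree ≤ 1 :=
  natDegree_linear_le

lemma natDegree_rowPoly_pow_le (M : Matrix (Fin 2) (Fin 2) R) (r : Fin 2) (n : ℕ) :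
    (rowPoly M r ^ n).natDegree ≤ n := by
  simpa using natDegree_pow_le_of_le n (natDegree_rowPoly_le M r)

lemma rowPoly_map (φ : R →+* S) (M : Matrix (Fin 2) (Fin 2) R) (r : Fin 2) :
    rowPoly (M.map φ) r = (rowPoly M r).map φ := by
  simp [rowPoly]

lemma rowPoly_mul (M N : Matrix (Fin 2) (Fin 2) R) (r : Fin 2) :
    rowPoly (M * N) r = C (M r 0) * rowPoly N 0 + C (M r 1) * rowPoly N 1 := by
  simp only [rowPoly, Matrix.mul_apply, Fin.sum_univ_two, C_add, C_mul]
  ring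

lemma symPow_map (φ : R →+* S) (n : ℕ) (M : Matrix (Fin 2) (Fin 2) R) :
    symPow n (M.map φ) = (symPow n M).map φ := by
  ext i j
  simp [symPow, rowPoly_map, ← Polynomial.map_pow, ← Polynomial.map_mul]

lemma symPow_diagonal (n : ℕ) (d : Fin 2 → R) :
    symPow n (Matrix.diagonal d) =
      .diagonal fun i ↦ d 0 ^ (i : ℕ) * d 1 ^ (n - i) := by
  ext i j
  simp only [symPow, rowPoly, Matrix.of_apply, Matrix.diagonal_apply]
  simp [mul_pow, ← C_pow, mul_right_comm _ (X ^ _), ← C_mul, -map_mul, -map_pow, coeff_X_pow,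
    Fin.ext_iff, eq_comm]

lemma aeval_homogenize {A : Type*} [CommSemiring A] [Algebra R A] (p : R[X]) (n : ℕ)
    (x : Fin 2 → A) :
    MvPolynomial.aeval x (p.homogenize n) =
      ∑ j : Fin (n + 1), algebraMap R A (p.coeff j) * (x 0 ^ (j : ℕ) * x 1 ^ (n - j)) := by
  rw [homogenize, Finset.Nat.sum_antidiagonal_eq_sum_range_succ_mk, map_sum,
    Finset.sum_range]
  simp [MvPolynomial.aeval_monomial, Finsupp.prod_fintype, Fin.prod_univ_two]

lemma homogenize_pow {p : R[X]} {m : ℕ} (hp : p.natDegree ≤ m) (n : ℕ) :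
    (p ^ n).homogenize (n * m) = p.homogenize m ^ n := by
  simpa using homogenize_finsetProd (s := Finset.range n) fun _ _ ↦ hp

lemma aeval_homogenize_rowPoly {A : Type*} [CommSemiring A] [Algebra R A]
    (M : Matrix (Fin 2) (Fin 2) R) (r : Fin 2) (x : Fin 2 → A) :
    MvPolynomial.aeval x ((rowPoly M r).homogenize 1) =
      algebraMap R A (M r 0) * x 0 + algebraMap R A (M r 1) * x 1 := by
  simp [rowPoly, add_comm]

theorem symPow_mul (n : ℕ) (M N : Matrix (Fin 2) (Fin 2) R) :
    symPow n (M * N) = symPow n M * symPow n N := by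
  ext i k
  have hi : n = i * 1 + (n - i) * 1 := by omega
  have hom : (rowPoly M 0 ^ (i : ℕ) * rowPoly M 1 ^ (n - i)).homogenize n =
      (rowPoly M 0).homogenize 1 ^ (i : ℕ) * (rowPoly M 1).homogenize 1 ^ (n - i) := by
    rw [← homogenize_pow (natDegree_rowPoly_le M 0), ← homogenize_pow (natDegree_rowPoly_le M 1),
      ← homogenize_mul, ← hi] <;> simpa using natDegree_rowPoly_pow_le ..
  have expand := congrArg (MvPolynomial.aeval (rowPoly N)) hom
  rw [aeval_homogenize, map_mul, map_pow, map_pow, aeval_homogenize_rowPoly,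
    aeval_homogenize_rowPoly] at expand
  simp only [algebraMap_eq] at expand
  simp only [symPow, Matrix.mul_apply, Matrix.of_apply, rowPoly_mul M N, ← expand,
    finsetSum_coeff, coeff_C_mul]

lemma coeff_coeff_swap (p : R[X][X]) (i j : ℕ) :
    ((Bivariate.swap p).coeff i).coeff j = (p.coeff j).coeff i := by
  induction p using Polynomial.induction_on' with
  | add p q hp hq => simp only [map_add, coeff_add, hp, hq]
  | monomial m f =>
    induction f using Polynomial.induction_on' with
    | add p q hp hq => simp only [map_add, coeff_add, hp, hq]
    | monomial l r =>
      rw [Bivariate.swap_monomial_monomial]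
      simp only [coeff_monomial]
      split_ifs <;> simp [coeff_monomial, *]

lemma coeff_C_mul_X_add_C_pow (a b : R) (n i : ℕ) :
    ((C a * X + C b) ^ n).coeff i = n.choose i * (a ^ i * b ^ (n - i)) := by
  have h : (C a * X + C b) ^ n = ((X + C b) ^ n).comp (C a * X) := by simp
  rw [h, comp_C_mul_X_coeff, coeff_X_add_C_pow]
  ring

/-- Both sides are the coefficient of `X ^ j * Y ^ i` in the `n`-th power of the bilinear form of
`M`, and swapping the variables transposes `M`. -/
theorem choose_mul_symPow (n : ℕ) (M : Matrix (Fin 2) (Fin 2) R) (i j : Fin (n + 1)) :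
    n.choose i * symPow n M i j = n.choose j * symPow n M.transpose j i := by
  have coeff_form (M : Matrix (Fin 2) (Fin 2) R) (i j : Fin (n + 1)) :
      (((C (rowPoly M 0) * X + C (rowPoly M 1)) ^ n).coeff i).coeff j =
        n.choose i * symPow n M i j := by
    rw [coeff_C_mul_X_add_C_pow, ← C_eq_natCast, coeff_C_mul]; rfl
  have swap_form : Bivariate.swap ((C (rowPoly M 0) * X + C (rowPoly M 1)) ^ n) =
      (C (rowPoly M.transpose 0) * X + C (rowPoly M.transpose 1)) ^ n := by
    simp only [rowPoly, map_pow, map_add, map_mul, Bivariate.swap_X, Bivariate.swap_Y,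
      Bivariate.swap_C_C, Matrix.transpose_apply]
    ring
  rw [← coeff_form, ← coeff_form, ← swap_form, coeff_coeff_swap]

/-- The extra factor `X` shifts the `i`-th diagonal coefficient into degree `n`, turning the trace
into a single coefficient of a complete homogeneous sum. -/
lemma trace_symPow_eq_coeff (n : ℕ) (M : Matrix (Fin 2) (Fin 2) R) :
    (symPow n M).trace =
      (∑ i ∈ Finset.range (n + 1), rowPoly M 0 ^ i * (X * rowPoly M 1) ^ (n - i)).coeff n := by
  rw [Finset.sum_range, finsetSum_coeff, Matrix.trace]
  refine Finset.sum_congr rfl fun i _ ↦ ?_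
  rw [mul_pow, mul_left_comm, coeff_X_pow_mul', if_pos (Nat.sub_le ..),
    Nat.sub_sub_self (Nat.lt_succ_iff.1 i.2)]
  rfl

end CommSemiring

lemma symPow_mul_symPow_swap_nonneg {K : Type*} [CommRing K] [LinearOrder K]
    [IsStrictOrderedRing K] {A : Matrix (Fin 2) (Fin 2) K} (hA : A.IsSymm) (n : ℕ)
    (i j : Fin (n + 1)) :
    0 ≤ symPow n A i j * symPow n A j i := by
  have symm := choose_mul_symPow n A i j
  rw [hA.eq] at symm
  refine nonneg_of_mul_nonneg_right (a := (n.choose i : K)) ?_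
    (mod_cast Nat.choose_pos (Nat.lt_succ_iff.1 i.2))
  rw [← mul_assoc, symm, mul_assoc]
  exact mul_nonneg (Nat.cast_nonneg _) (mul_self_nonneg _)

section CommRing

variable {R : Type*} [CommRing R]

lemma geom_sum₂_add_two_eq (p q u v : R) (n : ℕ) :
    ∑ i ∈ Finset.range (n + 3), p ^ i * q ^ (n + 2 - i) =
      (u + v) * ∑ i ∈ Finset.range (n + 2), p ^ i * q ^ (n + 1 - i) -
        (u * v - (p - u) * (q - v)) * ∑ i ∈ Finset.range (n + 1), p ^ i * q ^ (n - i) +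
        (p - u) * p ^ (n + 1) + (q - v) * q ^ (n + 1) := by
  have peel_p (m : ℕ) : ∑ i ∈ Finset.range (m + 2), p ^ i * q ^ (m + 1 - i) =
      p ^ (m + 1) + q * ∑ i ∈ Finset.range (m + 1), p ^ i * q ^ (m - i) :=
    geom_sum₂_succ_eq p q
  have peel_q : ∑ i ∈ Finset.range (n + 2), p ^ i * q ^ (n + 1 - i) =
      q ^ (n + 1) + p * ∑ i ∈ Finset.range (n + 1), p ^ i * q ^ (n - i) :=
    calc
      _ = ∑ i ∈ Finset.range (n + 2), q ^ i * p ^ (n + 1 - i) := geom_sum₂_comm p q (n + 2)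
      _ = q ^ (n + 1) + p * ∑ i ∈ Finset.range (n + 1), q ^ i * p ^ (n - i) :=
        geom_sum₂_succ_eq q p
      _ = _ := congrArg (q ^ (n + 1) + p * ·) (geom_sum₂_comm q p (n + 1))
  linear_combination peel_p (n + 1) + (q - v) * peel_q - u * peel_p n

theorem trace_symPow_add_two (n : ℕ) (M : Matrix (Fin 2) (Fin 2) R) :
    (symPow (n + 2) M).trace =
      M.trace * (symPow (n + 1) M).trace - M.det * (symPow n M).trace := by
  simp only [trace_symPow_eq_coeff]
  set p := rowPoly M 0 with hp
  set q := X * rowPoly M 1 with hq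
  have p_sub : p - C (M 0 0) * X = C (M 0 1) := by simp [hp, rowPoly]
  have q_sub : q - C (M 1 1) * X = C (M 1 0) * X ^ 2 := by simp only [hq, rowPoly]; ring
  have trace_form : (C (M 0 0) * X + C (M 1 1) * X : R[X]) = C M.trace * X := by
    simp [Matrix.trace_fin_two, add_mul]
  have det_form : C (M 0 0) * X * (C (M 1 1) * X) - C (M 0 1) * (C (M 1 0) * X ^ 2) =
      C M.det * X ^ 2 := by
    simp only [Matrix.det_fin_two, map_sub, map_mul]; ring
  have p_pow_coeff : (p ^ (n + 1)).coeff (n + 2) = 0 :=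
    coeff_eq_zero_of_natDegree_lt ((natDegree_rowPoly_pow_le M 0 _).trans_lt (by omega))
  have q_pow_coeff : (X ^ 2 * q ^ (n + 1)).coeff (n + 2) = 0 := by
    rw [hq, mul_pow, ← mul_assoc, ← pow_add, coeff_X_pow_mul', if_neg (by omega)]
  rw [geom_sum₂_add_two_eq p q (C (M 0 0) * X) (C (M 1 1) * X), p_sub, q_sub, trace_form, det_form]
  simp only [mul_assoc, coeff_add, coeff_sub, coeff_C_mul, p_pow_coeff, q_pow_coeff, coeff_X_mul,
    coeff_X_pow_mul, mul_zero, add_zero]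

theorem trace_symPow_of_det_eq_one {M : Matrix (Fin 2) (Fin 2) R} (hM : M.det = 1) (n : ℕ) :
    (symPow n M).trace = (Chebyshev.S R n).eval M.trace := by
  induction n using Nat.twoStepInduction with
  | zero => simp [Matrix.trace, symPow]
  | one => simp [Matrix.trace, Fin.sum_univ_two, symPow, rowPoly, add_comm]
  | more n ih₀ ih₁ =>
    push_cast at ih₁ ⊢
    rw [trace_symPow_add_two, Chebyshev.S_add_two, ih₀, ih₁, hM]
    simp

end CommRing

end SymmetricPower

section WeinsteinCoefficients

open LaurentPolynomial
open Polynomial hiding C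

variable {R S : Type*} [CommRing R] [CommRing S]

/-- Twice the cosine `1 - y + y * (q + q⁻¹) / 2`, as a Laurent polynomial in `q = T 1`. -/
noncomputable def weinsteinArg (y : R) : R[T;T⁻¹] :=
  C (2 * (1 - y)) + C y * (T 1 + T (-1))

/-- Weinstein's `Λ_k^n` as a function of `y = e^{-t}`: the coefficient of `q ^ k` in the Chebyshev
polynomial `U_n` at `1 - y + y * (q + q⁻¹) / 2`. The rescaled polynomial `S_n(2x) = U_n(x)`
avoids the division by `2`. -/
noncomputable def weinsteinCoeff (y : R) (n : ℕ) (k : ℤ) : R :=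
  ((Chebyshev.S R[T;T⁻¹] n).eval (weinsteinArg y)).coeff k

lemma coeff_C_mul_T_mul (r : R) (m k : ℤ) (f : R[T;T⁻¹]) :
    (C r * T m * f).coeff k = r * f.coeff (k - m) := by
  rw [← single_eq_C_mul_T, AddMonoidAlgebra.coeff_single_mul_apply, neg_add_eq_sub]

lemma coeff_weinsteinArg_mul (y : R) (f : R[T;T⁻¹]) (k : ℤ) :
    (weinsteinArg y * f).coeff k =
      2 * (1 - y) * f.coeff k + y * (f.coeff (k - 1) + f.coeff (k + 1)) := by
  have expand : weinsteinArg y * f = C (2 * (1 - y)) * T 0 * f +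
      (C y * T 1 * f + C y * T (-1) * f) := by
    rw [weinsteinArg, T_zero]; ring
  simp only [expand, AddMonoidAlgebra.coeff_add, Finsupp.add_apply, coeff_C_mul_T_mul, sub_zero,
    sub_neg_eq_add]
  ring

lemma weinsteinCoeff_zero (y : R) (k : ℤ) : weinsteinCoeff y 0 k = if k = 0 then 1 else 0 := by
  simp [weinsteinCoeff, ← T_zero, eq_comm]

lemma weinsteinCoeff_one (y : R) (k : ℤ) :
    weinsteinCoeff y 1 k = 2 * (1 - y) * weinsteinCoeff y 0 k +
      y * (weinsteinCoeff y 0 (k - 1) + weinsteinCoeff y 0 (k + 1)) := by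
  simp [weinsteinCoeff, ← coeff_weinsteinArg_mul]

lemma weinsteinCoeff_add_two (y : R) (n : ℕ) (k : ℤ) :
    weinsteinCoeff y (n + 2) k = 2 * (1 - y) * weinsteinCoeff y (n + 1) k +
      y * (weinsteinCoeff y (n + 1) (k - 1) + weinsteinCoeff y (n + 1) (k + 1)) -
      weinsteinCoeff y n k := by
  simp [weinsteinCoeff, ← coeff_weinsteinArg_mul, Chebyshev.S_add_two]

lemma map_weinsteinCoeff (φ : R →+* S) (y : R) (n : ℕ) (k : ℤ) :
    φ (weinsteinCoeff y n k) = weinsteinCoeff (φ y) n k := by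
  induction n using Nat.twoStepInduction generalizing k with
  | zero => simp [weinsteinCoeff_zero, apply_ite φ]
  | one => simp [weinsteinCoeff_one, weinsteinCoeff_zero, apply_ite φ, map_ofNat φ 2]
  | more n ih₀ ih₁ => simp [weinsteinCoeff_add_two, ih₀, ih₁, map_ofNat φ 2]

lemma weinsteinCoeff_eq_zero_of_lt_natAbs (y : R) {n : ℕ} {k : ℤ} (h : n < k.natAbs) :
    weinsteinCoeff y n k = 0 := by
  induction n using Nat.twoStepInduction generalizing k with
  | zero => rw [weinsteinCoeff_zero, if_neg (by omega)]
  | one =>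
    simp only [weinsteinCoeff_one, weinsteinCoeff_zero]
    rw [if_neg (by omega), if_neg (by omega), if_neg (by omega)]
    ring
  | more n ih₀ ih₁ =>
    rw [weinsteinCoeff_add_two, ih₀ (by omega), ih₁ (by omega), ih₁ (by omega), ih₁ (by omega)]
    ring

lemma weinsteinCoeff_one_left (n : ℕ) (k : ℤ) :
    weinsteinCoeff (1 : R) n k = if k.natAbs ≤ n ∧ (2 : ℤ) ∣ n - k then 1 else 0 := by
  induction n using Nat.twoStepInduction generalizing k with
  | zero => rw [weinsteinCoeff_zero]; congr 1; grind
  | one =>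
    simp only [weinsteinCoeff_one, weinsteinCoeff_zero]
    split_ifs <;> first | omega | norm_num
  | more n ih₀ ih₁ =>
    simp only [weinsteinCoeff_add_two, ih₀, ih₁]
    split_ifs <;> first | omega | norm_num

lemma weinsteinCoeff_one_left_add_succ {n k : ℕ} (hk : k ≤ n) :
    weinsteinCoeff (1 : R) n k + weinsteinCoeff 1 n (k + 1) = 1 := by
  simp only [weinsteinCoeff_one_left]
  split_ifs <;> first | omega | norm_num

/-- Weinstein's differential relation between consecutive members of a family of polynomials in
`y = e^{-t}`; `-y d/dy` is `d/dt`, so this is the derivative of the de Branges system. -/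
def WeinsteinRelation (c : ℤ → R[X]) : Prop :=
  ∀ k : ℤ, -X * (derivative (c k) + derivative (c (k + 1))) =
    ((k : R[X]) + 1) * c (k + 1) - (k : R[X]) * c k

lemma WeinsteinRelation.sub {c d : ℤ → R[X]} (hc : WeinsteinRelation c)
    (hd : WeinsteinRelation d) : WeinsteinRelation (c - d) := fun k ↦ by
  simp only [Pi.sub_apply, derivative_sub]
  linear_combination hc k - hd k

lemma WeinsteinRelation.weinsteinArg_mul {c : ℤ → R[X]} (hc : WeinsteinRelation c) :
    WeinsteinRelation fun k ↦ 2 * (1 - X) * c k + X * (c (k - 1) + c (k + 1)) := fun k ↦ by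
  have pred := hc (k - 1)
  have succ := hc (k + 1)
  rw [sub_add_cancel] at pred
  push_cast at pred succ
  simp only [derivative_mul, derivative_sub, derivative_add, derivative_X, derivative_one,
    derivative_ofNat, add_sub_cancel_right]
  linear_combination 2 * (1 - X) * hc k + X * (pred + succ)

theorem weinsteinRelation_weinsteinCoeff (n : ℕ) :
    WeinsteinRelation (weinsteinCoeff (X : R[X]) n) := by
  have base : WeinsteinRelation (weinsteinCoeff (X : R[X]) 0) := fun k ↦ by
    rcases eq_or_ne k 0 with rfl | hk
    · simp [weinsteinCoeff_zero]
    rcases eq_or_ne k (-1) with rfl | hk'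
    · simp [weinsteinCoeff_zero]
    · simp [weinsteinCoeff_zero, hk, show k + 1 ≠ 0 by omega]
  induction n using Nat.twoStepInduction with
  | zero => exact base
  | one => simpa only [← weinsteinCoeff_one] using base.weinsteinArg_mul
  | more n ih₀ ih₁ =>
    convert ih₁.weinsteinArg_mul.sub ih₀ using 1
    ext1 k
    exact weinsteinCoeff_add_two X n k

lemma trace_symPow_mul_diagonal_mul_diagonal (n : ℕ) (A B : Matrix (Fin 2) (Fin 2) R) :
    (symPow n (A.map C * .diagonal ![T 1, 1] * B.map C *
        .diagonal ![T (-1), 1])).trace =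
      ∑ i : Fin (n + 1), ∑ j : Fin (n + 1),
        C (symPow n A i j * symPow n B j i) * T ((j : ℤ) - i) := by
  simp only [symPow_mul, symPow_map, symPow_diagonal, Matrix.trace, Matrix.diag_apply,
    Matrix.mul_diagonal]
  simp only [Matrix.mul_apply (M := _ * _), Matrix.mul_diagonal, Matrix.map_apply, Finset.sum_mul]
  refine Finset.sum_congr rfl fun i _ ↦ Finset.sum_congr rfl fun j _ ↦ ?_
  simp only [Matrix.cons_val_zero, Matrix.cons_val_one, one_pow, mul_one, T_pow, mul_neg,
    T_sub, map_mul]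
  ring

theorem weinsteinCoeff_sq_eq_sum {a b : R} (h : a ^ 2 + b ^ 2 = 1) (n : ℕ) (k : ℤ) :
    weinsteinCoeff (b ^ 2) n k =
      ∑ i : Fin (n + 1), ∑ j : Fin (n + 1), if (j : ℤ) - i = k then
        symPow n !![a, b; b, -a] i j * symPow n !![a, b; b, -a] j i else 0 := by
  set A : Matrix (Fin 2) (Fin 2) R := !![a, b; b, -a] with hA
  set G : Matrix (Fin 2) (Fin 2) R[T;T⁻¹] := A.map C * .diagonal ![T 1, 1] *
    A.map C * .diagonal ![T (-1), 1] with hG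
  have T_mul_T_neg : (T 1 * T (-1) : R[T;T⁻¹]) = 1 := by rw [← T_add]; simp
  have det_A : A.det = -1 := by rw [hA, Matrix.det_fin_two_of]; linear_combination -h
  have det_G : G.det = 1 := by
    simp [hG, ← RingHom.mapMatrix_apply, ← RingHom.map_det, det_A, Fin.prod_univ_two, T_mul_T_neg]
  have trace_G : G.trace = weinsteinArg (b ^ 2) := by
    have ha : 1 - b ^ 2 = a ^ 2 := by linear_combination -h
    have entries : G.trace = C a * T 1 * C a * T (-1) + C b * C b * T (-1) +
        (C b * T 1 * C b + C a * C a) := by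
      simp [hG, hA, Matrix.trace_fin_two, Matrix.mul_apply, Fin.sum_univ_two, add_mul]
    simp only [entries, weinsteinArg, ha, map_mul, map_pow, map_ofNat C 2]
    linear_combination (C a : R[T;T⁻¹]) ^ 2 * T_mul_T_neg
  rw [weinsteinCoeff, ← trace_G, ← trace_symPow_of_det_eq_one det_G, hG,
    trace_symPow_mul_diagonal_mul_diagonal]
  simp only [AddMonoidAlgebra.coeff_sum, Finsupp.finsetSum_apply, ← single_eq_C_mul_T,
    AddMonoidAlgebra.coeff_single, Finsupp.single_apply]

theorem weinsteinCoeff_nonneg {y : ℝ} (hy₀ : 0 ≤ y) (hy₁ : y ≤ 1) (n : ℕ) (k : ℤ) :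
    0 ≤ weinsteinCoeff y n k := by
  have unit : √(1 - y) ^ 2 + √y ^ 2 = 1 := by
    rw [Real.sq_sqrt hy₀, Real.sq_sqrt (sub_nonneg.2 hy₁), sub_add_cancel]
  have symm : !![√(1 - y), √y; √y, -√(1 - y)].IsSymm := by
    ext i j; fin_cases i <;> fin_cases j <;> rfl
  rw [← Real.sq_sqrt hy₀, weinsteinCoeff_sq_eq_sum unit]
  refine Finset.sum_nonneg fun i _ ↦ Finset.sum_nonneg fun j _ ↦ ?_
  split_ifs
  · exact symPow_mul_symPow_swap_nonneg symm n i j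
  · exact le_rfl

end WeinsteinCoefficients

section DeBrangesSystem

open Polynomial

lemma hasDerivAt_eval_exp_neg (p : ℝ[X]) (t : ℝ) :
    HasDerivAt (fun t ↦ p.eval (Real.exp (-t))) ((-X * derivative p).eval (Real.exp (-t))) t := by
  refine ((p.hasDerivAt _).comp t (hasDerivAt_neg t).exp).congr_deriv ?_
  simp only [eval_mul, eval_neg, eval_X]
  ring

lemma hasDerivAt_weinsteinCoeff_exp_neg_add (n : ℕ) (k : ℤ) (t : ℝ) :
    HasDerivAt
      (fun t ↦ weinsteinCoeff (Real.exp (-t)) n k + weinsteinCoeff (Real.exp (-t)) n (k + 1))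
      ((k + 1) * weinsteinCoeff (Real.exp (-t)) n (k + 1) -
        k * weinsteinCoeff (Real.exp (-t)) n k) t := by
  have eval_coeff (y : ℝ) (k : ℤ) :
      (weinsteinCoeff (X : ℝ[X]) n k).eval y = weinsteinCoeff y n k := by
    simpa using map_weinsteinCoeff (evalRingHom y) X n k
  have rel := congrArg (eval (Real.exp (-t))) (weinsteinRelation_weinsteinCoeff n k)
  have deriv := hasDerivAt_eval_exp_neg (weinsteinCoeff X n k + weinsteinCoeff X n (k + 1)) t
  rw [derivative_add, rel] at deriv
  simpa [eval_coeff] using deriv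

lemma eq_zero_of_hasDerivAt_const_smul {E : Type*} [NormedAddCommGroup E] [NormedSpace ℝ E]
    {f : ℝ → E} {c t₀ : ℝ} (hf : ∀ t, HasDerivAt f (c • f t) t) (h₀ : f t₀ = 0) : f = 0 :=
  ODE_solution_unique_univ (v := fun _ x ↦ c • x) (s := fun _ ↦ Set.univ)
    (fun _ ↦ (lipschitzWith_smul c).lipschitzOnWith) (fun t ↦ ⟨hf t, trivial⟩)
    (fun t ↦ ⟨by simp, trivial⟩) h₀

lemma IsDeBrangesSystem.deriv_eq_of_deriv_succ_eq {n : ℕ} {τ : ℕ → ℝ → ℝ}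
    (hτ : IsDeBrangesSystem n τ) {k : ℕ} (hk : 1 ≤ k) (hkn : k ≤ n)
    (h_succ : ∀ t, deriv (τ (k + 1)) t = -(k + 1) * weinsteinCoeff (Real.exp (-t)) n (k + 1))
    (t : ℝ) : deriv (τ k) t = -k * weinsteinCoeff (Real.exp (-t)) n k := by
  have hk₁ : (k : ℝ) + 1 ≠ 0 := by positivity
  have deriv_τ (t : ℝ) : deriv (τ k) t =
      k * (τ (k + 1) t - τ k t + weinsteinCoeff (Real.exp (-t)) n (k + 1)) := by
    have system := hτ.system k hk hkn t
    rw [h_succ t, neg_mul, neg_div, mul_div_cancel_left₀ _ hk₁] at system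
    rw [system]
    field_simp
    ring
  set g : ℝ → ℝ := fun t ↦ τ (k + 1) t - τ k t +
    (weinsteinCoeff (Real.exp (-t)) n k + weinsteinCoeff (Real.exp (-t)) n (k + 1)) with hg
  have deriv_g (t : ℝ) : HasDerivAt g (-k * g t) t := by
    have deriv_k := (hτ.differentiable k hk (by omega) t).hasDerivAt
    have deriv_succ := (hτ.differentiable (k + 1) (by omega) (by omega) t).hasDerivAt
    refine ((deriv_succ.sub deriv_k).add
      (hasDerivAt_weinsteinCoeff_exp_neg_add n k t)).congr_deriv ?_
    rw [deriv_τ, h_succ]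
    push_cast
    ring
  have g_zero : g 0 = 0 := by
    simp only [hg, neg_zero, Real.exp_zero, hτ.initial k hk (by omega),
      hτ.initial (k + 1) (by omega) (by omega)]
    rw [weinsteinCoeff_one_left_add_succ hkn]
    push_cast
    ring
  have g_eq : g t = 0 := congrFun (eq_zero_of_hasDerivAt_const_smul deriv_g g_zero) t
  rw [deriv_τ]
  linear_combination (k : ℝ) * g_eq

theorem IsDeBrangesSystem.deriv_eq {n : ℕ} {τ : ℕ → ℝ → ℝ} (hτ : IsDeBrangesSystem n τ) {k : ℕ}
    (hk : 1 ≤ k) (hkn : k ≤ n + 1) (t : ℝ) :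
    deriv (τ k) t = -k * weinsteinCoeff (Real.exp (-t)) n k := by
  induction hkn using Nat.decreasingInduction generalizing t with
  | self =>
    rw [show τ (n + 1) = fun _ ↦ 0 from funext hτ.top_eq_zero,
      weinsteinCoeff_eq_zero_of_lt_natAbs _ (by omega)]
    simp
  | of_succ k hkn ih =>
    exact hτ.deriv_eq_of_deriv_succ_eq hk (by omega) (fun t ↦ mod_cast ih (by omega) t) t

end DeBrangesSystem

/-- Monotonicity of the de Branges functions: they are nonincreasing on `[0, ∞)`: `τ̇_k(t) ≤ 0` (equivalent to the Askey--Gasper inequality and to Weinstein's inequality `Λ_k^n(t) ≥ 0`). -/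
theorem deBranges_deriv_nonpos (n : ℕ) (hn : 1 ≤ n) (τ : ℕ → ℝ → ℝ)
    (hτ : IsDeBrangesSystem n τ) :
    ∀ k : ℕ, 1 ≤ k → k ≤ n + 1 → ∀ t : ℝ, 0 ≤ t → deriv (τ k) t ≤ 0 := by
  intro k hk hkn t ht
  rw [hτ.deriv_eq hk hkn, neg_mul, neg_nonpos]
  exact mul_nonneg k.cast_nonneg
    (weinsteinCoeff_nonneg (Real.exp_nonneg _) (Real.exp_le_one_iff.2 (neg_nonpos.2 ht)) n k)
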